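/- The map from SL(2,ℂ) to linear transformations of 2×2 complex Hermitian matrices sending M to the map X ↦ M X Mᴴ is a group homomorphism whose kernel is {I, -I}. -/

import Mathlib

open Matrix

/-- The congruence action `A ↦ (X ↦ A X Aᴴ)` of square matrices on Hermitian matrices. -/
noncomputable def hermitianCongr (n : Type*) [Fintype n] [DecidableEq n] :
    Matrix n n ℂ →* Module.End ℝ (selfAdjoint (Matrix n n ℂ)) where
  toFun A :=
    { toFun := fun X => ⟨A * X * Aᴴ, X.2.conjugate A⟩
      map_add' := fun X Y => Subtype.ext (by simp [mul_add, add_mul])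
      map_smul' := fun r X => Subtype.ext (by simp) }
  map_one' := LinearMap.ext fun X => Subtype.ext (by simp)
  map_mul' A B := LinearMap.ext fun X => Subtype.ext (by simp [mul_assoc])

theorem coe_hermitianCongr_apply {n : Type*} [Fintype n] [DecidableEq n] (A : Matrix n n ℂ)
    (X : selfAdjoint (Matrix n n ℂ)) :
    (hermitianCongr n A X : Matrix n n ℂ) = A * (X : Matrix n n ℂ) * Aᴴ :=
  rfl

/-- A matrix acting trivially is unitary, hence commutes with all Hermitian matrices, which span. -/
theorem commute_of_hermitianCongr_eq_one {n : Type*} [Fintype n] [DecidableEq n]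
    {A : Matrix n n ℂ} (hA : hermitianCongr n A = 1) (B : Matrix n n ℂ) : Commute A B := by
  have fix (X : selfAdjoint (Matrix n n ℂ)) : A * (X : Matrix n n ℂ) * Aᴴ = X := by
    rw [← coe_hermitianCongr_apply, hA, Module.End.one_apply]
  have unitary : Aᴴ * A = 1 := mul_eq_one_comm.mp (by simpa using fix 1)
  have comm (X : selfAdjoint (Matrix n n ℂ)) : Commute A (X : Matrix n n ℂ) := by
    calc A * (X : Matrix n n ℂ) = A * X * (Aᴴ * A) := by rw [unitary, mul_one]
      _ = X * A := by rw [← mul_assoc, fix]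
  rw [← realPart_add_I_smul_imaginaryPart B]
  exact (comm _).add_right ((comm _).smul_right _)

theorem hermitianCongr_fin_two_eq_one_iff (M : SpecialLinearGroup (Fin 2) ℂ) :
    hermitianCongr (Fin 2) M.val = 1 ↔ M.val = 1 ∨ M.val = -1 := by
  refine ⟨fun h => ?_, fun h => LinearMap.ext fun X => Subtype.ext ?_⟩
  · obtain ⟨c, hc⟩ := mem_range_scalar_of_commute_single (M := M.val) fun i j _ =>
      (commute_of_hermitianCongr_eq_one h (single i j 1)).symm
    have hdet : c ^ 2 = 1 := by simpa [← hc, scalar_apply] using M.det_coe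
    rcases eq_or_eq_neg_of_sq_eq_sq c 1 (by rw [hdet, one_pow]) with rfl | rfl
    · exact Or.inl (by rw [← hc, map_one])
    · exact Or.inr (by rw [← hc, map_neg, map_one])
  · rcases h with h | h <;> simp [coe_hermitianCongr_apply, h]

theorem sl2c_to_hermitian_action_hom_with_kernel :
    ∃ φ : Matrix.SpecialLinearGroup (Fin 2) ℂ →*
        LinearMap.GeneralLinearGroup ℝ (selfAdjoint (Matrix (Fin 2) (Fin 2) ℂ)),
      (∀ (M : Matrix.SpecialLinearGroup (Fin 2) ℂ)
         (X : selfAdjoint (Matrix (Fin 2) (Fin 2) ℂ)),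
        (((φ M).val X : selfAdjoint (Matrix (Fin 2) (Fin 2) ℂ)) : Matrix (Fin 2) (Fin 2) ℂ)
          = M.val * (X : Matrix (Fin 2) (Fin 2) ℂ) * (M.val)ᴴ) ∧
      (∀ M : Matrix.SpecialLinearGroup (Fin 2) ℂ,
        φ M = 1 ↔ M.val = 1 ∨ M.val = -1) := by
  refine ⟨((hermitianCongr (Fin 2)).comp
    ((Units.coeHom _).comp SpecialLinearGroup.toGL)).toHomUnits, fun _ _ => rfl, fun M => ?_⟩
  rw [← hermitianCongr_fin_two_eq_one_iff, Units.ext_iff]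
  rfl
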